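/- Let M_k be n×n real matrices, α_k positive real numbers, and f : ℝⁿ → ℝ a function with continuous first derivatives and bounded level sets. Suppose the matrices M_k M_kᵀ are nonsingular, the iterates x_k ∈ ℝⁿ satisfy x_{k+1} = x_k + α_k d_k with d_k = −(M_k M_kᵀ)^{−1} ∇f(x_k), and the first Wolfe condition holds. If there exists ᾱ > 0 such that α_k ≥ ᾱ for all k and the matrices M_k are bounded (sup_k ‖M_k‖ < ∞), then lim_{k→∞} ∇f(x_k) = 0 for every starting point x_0. -/

import Mathlib

/-!
Writing `g = ∇f (x k)`, `B = M Mᵀ` and `w = Mᵀ B⁻¹ g`, one has `g = M w` and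
`gᵀ B⁻¹ g = ‖w‖²`, so boundedness of `M` gives `‖g‖² ≤ L * gᵀ B⁻¹ g` with `L` independent of
the step (`sq_le_mul_dotProduct_inv`). Together with the Wolfe condition and the lower bound on
the step sizes this makes `f (x k) - f (x (k+1))` at least a fixed positive multiple of `‖g‖²`.
The values `f (x k)` decrease and stay above the minimum of `f` on the compact sublevel set
of `x 0`, hence converge; their successive differences tend to `0`, and so does `‖g‖²`.
-/

open Filter Matrix
open scoped RealInnerProductSpace

/-- The quadratic form of `(M Mᵀ)⁻¹` is bounded below in terms of the entries of `M`. -/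
theorem sq_le_mul_dotProduct_inv {n : ℕ} (M : Matrix (Fin n) (Fin n) ℝ)
    (hM : IsUnit (M * Mᵀ)) (C : ℝ) (hC : ∀ i j, |M i j| ≤ C) (g : Fin n → ℝ) :
    g ⬝ᵥ g ≤ (n * (n * C ^ 2)) * (g ⬝ᵥ ((M * Mᵀ)⁻¹ *ᵥ g)) := by
  set y := (M * Mᵀ)⁻¹ *ᵥ g with hy
  set w := Mᵀ *ᵥ y with hw
  have hg : g = M *ᵥ w := by
    rw [hw, hy, mulVec_mulVec, mulVec_mulVec,
      mul_nonsing_inv _ ((isUnit_iff_isUnit_det _).1 hM), one_mulVec]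
  have hgy : g ⬝ᵥ y = w ⬝ᵥ w := by
    conv_lhs => rw [hg]
    rw [dotProduct_comm, dotProduct_mulVec, ← mulVec_transpose]
  have hw0 : w ⬝ᵥ w = ∑ j, w j ^ 2 := by simp [dotProduct, sq]
  rw [hgy]
  calc g ⬝ᵥ g = ∑ i, (∑ j, M i j * w j) ^ 2 := by
        rw [hg]; simp [dotProduct, mulVec, sq]
    _ ≤ ∑ _i : Fin n, (n * C ^ 2) * (w ⬝ᵥ w) := by
        refine Finset.sum_le_sum fun i _ => ?_
        refine (Finset.sum_mul_sq_le_sq_mul_sq _ _ _).trans ?_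
        rw [hw0]
        refine mul_le_mul_of_nonneg_right ?_ (Finset.sum_nonneg fun j _ => sq_nonneg _)
        calc ∑ j, M i j ^ 2 ≤ ∑ _j : Fin n, C ^ 2 :=
              Finset.sum_le_sum fun j _ => sq_le_sq' (abs_le.1 (hC i j)).1 (abs_le.1 (hC i j)).2
          _ = n * C ^ 2 := by simp
    _ = _ := by simp [mul_assoc]

/-- Theorem 1.1 of the paper. If the matrices `M k` are bounded,
the step sizes `α k` are bounded away from zero, the iterates follow
`x (k+1) = x k + α k • d k` with `d k = -(M k * (M k)ᵀ)⁻¹ ∇f (x k)`, the first Wolfe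
condition holds, and `f` is `C¹` with bounded level sets, then `∇f (x k) → 0`. -/
theorem bfgs_divergence_stmt0 (n : ℕ) (f : EuclideanSpace ℝ (Fin n) → ℝ)
    (hf : ContDiff ℝ 1 f)
    (hlev : ∀ a : ℝ, Bornology.IsBounded {x : EuclideanSpace ℝ (Fin n) | f x ≤ a})
    (M : ℕ → Matrix (Fin n) (Fin n) ℝ) (α : ℕ → ℝ) (hα : ∀ k, 0 < α k)
    (hinv : ∀ k, IsUnit (M k * (M k)ᵀ))
    (x : ℕ → EuclideanSpace ℝ (Fin n))
    (hiter : ∀ k, x (k + 1) =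
      x k + α k • (-(Matrix.toEuclideanLin ((M k * (M k)ᵀ)⁻¹) (gradient f (x k)))))
    (hwolfe : ∃ σ : ℝ, σ ∈ Set.Ioo (0 : ℝ) 1 ∧ ∀ k,
      f (x (k + 1)) ≤ f (x k) + σ * ⟪gradient f (x k), x (k + 1) - x k⟫)
    (hstep : ∃ α₀ : ℝ, 0 < α₀ ∧ ∀ k, α₀ ≤ α k)
    (hbdd : ∃ C : ℝ, ∀ k i j, |M k i j| ≤ C) :
    Tendsto (fun k => gradient f (x k)) atTop (nhds 0) := by
  obtain ⟨σ, ⟨hσ, -⟩, hw⟩ := hwolfe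
  obtain ⟨a, ha, hstep⟩ := hstep
  obtain ⟨C, hC⟩ := hbdd
  -- The summand `1` keeps `L` positive when `n = 0` or `C = 0`.
  set L : ℝ := n * (n * C ^ 2) + 1 with hL
  have hLpos : 0 < L := by positivity
  have hdec : ∀ k, σ * a / L * ‖gradient f (x k)‖ ^ 2 ≤ f (x k) - f (x (k + 1)) := by
    intro k
    set g := gradient f (x k) with hg
    set q : ℝ := g.ofLp ⬝ᵥ ((M k * (M k)ᵀ)⁻¹ *ᵥ g.ofLp) with hq
    have hin : ⟪g, x (k + 1) - x k⟫ = -(α k * q) := by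
      rw [hiter k, add_sub_cancel_left, inner_smul_right, inner_neg_right, mul_neg,
        EuclideanSpace.inner_eq_star_dotProduct]
      simp [hq, hg, dotProduct_comm]
    have hnorm : ‖g‖ ^ 2 = g.ofLp ⬝ᵥ g.ofLp := by
      rw [EuclideanSpace.real_norm_sq_eq]; simp [dotProduct, sq]
    have h1 := sq_le_mul_dotProduct_inv (M k) (hinv k) C (hC k) g.ofLp
    rw [← hnorm, ← hq] at h1
    have hq0 : 0 ≤ q := by
      have hpsd : ((M k * (M k)ᵀ)⁻¹).PosSemidef := by
        have := (posSemidef_self_mul_conjTranspose (M k)).inv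
        rwa [conjTranspose_eq_transpose_of_trivial] at this
      simpa [hq] using hpsd.dotProduct_mulVec_nonneg g.ofLp
    have h2 : ‖g‖ ^ 2 / L ≤ q := by
      rw [div_le_iff₀ hLpos]; rw [hL]; nlinarith
    have h3 := hw k
    rw [← hg, hin] at h3
    have h4 : σ * (a * (‖g‖ ^ 2 / L)) ≤ σ * (α k * q) := by
      have := hstep k
      have := hα k
      gcongr
    calc σ * a / L * ‖g‖ ^ 2 = σ * (a * (‖g‖ ^ 2 / L)) := by ring
      _ ≤ _ := by linarith
  have hc : 0 < σ * a / L := by positivity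
  have hanti : Antitone fun k => f (x k) := by
    refine antitone_nat_of_succ_le fun k => ?_
    have := hdec k
    have : 0 ≤ σ * a / L * ‖gradient f (x k)‖ ^ 2 := by positivity
    linarith
  have hcpt : IsCompact {z : EuclideanSpace ℝ (Fin n) | f z ≤ f (x 0)} :=
    Metric.isCompact_of_isClosed_isBounded (isClosed_le hf.continuous continuous_const) (hlev _)
  obtain ⟨m, -, hm⟩ := hcpt.exists_isMinOn ⟨x 0, le_refl (f (x 0))⟩ hf.continuous.continuousOn
  have hbelow : BddBelow (Set.range fun k => f (x k)) := by
    refine ⟨f m, ?_⟩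
    rintro _ ⟨k, rfl⟩
    exact hm (show f (x k) ≤ f (x 0) from hanti (Nat.zero_le k))
  have hlim := tendsto_atTop_ciInf hanti hbelow
  have hdiff := hlim.sub (hlim.comp (tendsto_add_atTop_nat 1))
  rw [sub_self] at hdiff
  have hsq : Tendsto (fun k => ‖gradient f (x k)‖ ^ 2) atTop (nhds 0) := by
    have hdiff' := hdiff.div_const (σ * a / L)
    rw [zero_div] at hdiff'
    refine squeeze_zero (fun k => sq_nonneg _) (fun k => ?_) hdiff'
    rw [le_div_iff₀ hc, mul_comm]
    exact hdec k
  rw [tendsto_zero_iff_norm_tendsto_zero]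
  simpa using hsq.sqrt
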